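/- (Second derivative of a star-exponential.) For every configuration functional Φ ∈ A₀ over a type E and all x₁, x₂ ∈ E one has D_{x₁,x₂}(exp∗ Φ) = (exp∗ Φ) ∗ ( D_{x₁} Φ ∗ D_{x₂} Φ + D_{x₁,x₂} Φ ). -/

import Mathlib

open MeasureTheory Finset

abbrev CF (E : Type) : Type := (n : ℕ) → (Fin n → E) → ℝ

namespace CF

variable {E : Type}

/-- Symmetry of a configuration functional under permutations of the arguments. -/
def IsSymm (F : CF E) : Prop :=
  ∀ (n : ℕ) (σ : Equiv.Perm (Fin n)) (x : Fin n → E), F n (x ∘ σ) = F n x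

/-- The subtuple of `x` with indices in `I`, listed in increasing order. -/
noncomputable def sub {n : ℕ} (x : Fin n → E) (I : Finset (Fin n)) : Fin I.card → E :=
  fun i => x (I.orderIsoOfFin rfl i).1

/-- The convolution `Ψ ∗ Φ`. -/
noncomputable def conv (Ψ Φ : CF E) : CF E :=
  fun n x => ∑ I : Finset (Fin n), Ψ I.card (sub x I) * Φ Iᶜ.card (sub x Iᶜ)

/-- The unit `𝟙`. -/
def unit : CF E := fun n _ => if n = 0 then 1 else 0

/-- Star-powers `Φ^{∗m}`. -/
noncomputable def starPow (Φ : CF E) : ℕ → CF E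
  | 0 => unit
  | m + 1 => conv Φ (starPow Φ m)

/-- The star-exponential `exp∗ Φ = 𝟙 + Σ_{m≥1} Φ^{∗m}/m!`; on `A₀` the sum in the
`n`-th component is finite since `(Φ^{∗m})^{(n)} = 0` for `m > n`. -/
noncomputable def starExp (Φ : CF E) : CF E :=
  fun n x => ∑ m ∈ Finset.range (n + 1), ((m.factorial : ℝ))⁻¹ * starPow Φ m n x

/-- The derivative `D_x`. -/
noncomputable def D (x : E) (Φ : CF E) : CF E := fun n y => Φ (n + 1) (Fin.cons x y)

/-- The second derivative `D_{x₁,x₂} = D_{x₁} ∘ D_{x₂}`. -/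
noncomputable def D2 (x₁ x₂ : E) (Φ : CF E) : CF E := D x₁ (D x₂ Φ)

theorem val_eq (F : CF E) {n k : ℕ} (z : Fin n → E) (I : Finset (Fin n)) (h : I.card = k) :
    F I.card (sub z I) = F k (fun i => z (I.orderEmbOfFin h i)) := by
  subst h
  rfl

theorem val_map (F : CF E) {n : ℕ} (x : E) (y : Fin n → E) (J : Finset (Fin n))
    (I : Finset (Fin (n+1))) (hI : I = J.map (Fin.succEmb n)) :
    F I.card (sub (Fin.cons x y : Fin (n+1) → E) I) = F J.card (sub y J) := by
  have hc : I.card = J.card := by rw [hI, Finset.card_map]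
  rw [val_eq F _ I hc]
  congr 1
  have : (fun i => Fin.succ (J.orderEmbOfFin rfl i)) = I.orderEmbOfFin hc := by
    apply Finset.orderEmbOfFin_unique
    · intro i
      rw [hI]
      simp
    · intro a b hab
      simpa using hab
  funext i
  rw [← this]
  rfl

theorem val_insert (F : CF E) {n : ℕ} (x : E) (y : Fin n → E) (J : Finset (Fin n))
    (I : Finset (Fin (n+1))) (hI : I = insert 0 (J.map (Fin.succEmb n))) :
    F I.card (sub (Fin.cons x y : Fin (n+1) → E) I) = D x F J.card (sub y J) := by
  have hc : I.card = J.card + 1 := by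
    rw [hI, Finset.card_insert_of_notMem (by simp), Finset.card_map]
  rw [val_eq F _ I hc, D]
  congr 1
  have : (Fin.cons 0 (fun i => Fin.succ (J.orderEmbOfFin rfl i)) : Fin (J.card+1) → Fin (n+1))
      = I.orderEmbOfFin hc := by
    apply Finset.orderEmbOfFin_unique
    · intro i
      rw [hI]
      refine Fin.cases ?_ (fun i => ?_) i <;> simp
    · intro a b
      refine Fin.cases ?_ (fun a => ?_) a <;> refine Fin.cases ?_ (fun b => ?_) b <;> simp
  funext i
  rw [← this]
  refine Fin.cases ?_ (fun i => ?_) i <;> simp [sub]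

theorem sum_finset_succ {n : ℕ} (f : Finset (Fin (n+1)) → ℝ) :
    ∑ I, f I = ∑ J : Finset (Fin n), f (insert 0 (J.map (Fin.succEmb n)))
      + ∑ J : Finset (Fin n), f (J.map (Fin.succEmb n)) := by
  have h : (univ : Finset (Finset (Fin (n+1)))) =
      (insert 0 ((univ : Finset (Fin n)).map (Fin.succEmb n))).powerset := by
    ext I
    simp only [mem_univ, mem_powerset, true_iff]
    intro i _
    refine Fin.cases ?_ (fun i => ?_) i <;> simp
  have key : ∀ g : Finset (Fin (n+1)) → ℝ,
      ∑ t ∈ ((univ : Finset (Fin n)).map (Fin.succEmb n)).powerset, g t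
        = ∑ J : Finset (Fin n), g (J.map (Fin.succEmb n)) := by
    intro g
    symm
    apply Finset.sum_nbij (fun J => J.map (Fin.succEmb n))
    · intro J _
      simp only [mem_powerset]
      exact Finset.map_subset_map.2 (subset_univ _)
    · intro a _ b _ hab
      exact Finset.map_injective _ hab
    · intro t ht
      simp only [coe_powerset, Set.mem_preimage, Set.mem_powerset_iff, coe_subset] at ht
      obtain ⟨u, _, hu⟩ := Finset.subset_map_iff.1 ht
      exact ⟨u, by simp, hu.symm⟩
    · intro _ _
      rfl
  rw [h, Finset.sum_powerset_insert (by simp), key, key, add_comm]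

theorem D_conv (x : E) (Ψ Φ : CF E) :
    D x (conv Ψ Φ) = conv (D x Ψ) Φ + conv Ψ (D x Φ) := by
  funext n y
  change conv Ψ Φ (n+1) (Fin.cons x y) = conv (D x Ψ) Φ n y + conv Ψ (D x Φ) n y
  unfold conv
  rw [sum_finset_succ]
  congr 1
  · refine Finset.sum_congr rfl fun J _ => ?_
    rw [val_insert Ψ x y J _ rfl, val_map Φ x y Jᶜ]
    ext i
    refine Fin.cases ?_ (fun i => ?_) i <;> simp
  · refine Finset.sum_congr rfl fun J _ => ?_
    rw [val_map Ψ x y J _ rfl, val_insert Φ x y Jᶜ]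
    ext i
    refine Fin.cases ?_ (fun i => ?_) i <;> simp

theorem apply_succ (F : CF E) (n : ℕ) (z : Fin (n+1) → E) :
    F (n+1) z = D (z 0) F n (Fin.tail z) := by
  simp [D]

theorem conv_zero (Ψ Φ : CF E) (y : Fin 0 → E) : conv Ψ Φ 0 y = Ψ 0 y * Φ 0 y := by
  unfold conv
  rw [Fintype.sum_eq_single (∅ : Finset (Fin 0)) (fun I hI => absurd (Subsingleton.elim _ _) hI)]
  have h : ∀ (F : CF E) (I : Finset (Fin 0)), F I.card (sub y I) = F 0 y := by
    intro F I
    rw [val_eq F y I (k := 0) (by rw [Subsingleton.elim I ∅]; rfl)]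
    congr 1
    exact Subsingleton.elim _ _
  rw [h Ψ, h Φ]

theorem conv_add (Ψ Φ Χ : CF E) : conv Ψ (Φ + Χ) = conv Ψ Φ + conv Ψ Χ := by
  funext n y
  simp [conv, mul_add, Finset.sum_add_distrib]

theorem conv_smul (c : ℝ) (Ψ Φ : CF E) : conv Ψ (c • Φ) = c • conv Ψ Φ := by
  funext n y
  simp [conv, Finset.mul_sum, mul_left_comm]

theorem conv_comm (Ψ Φ : CF E) : conv Ψ Φ = conv Φ Ψ := by
  funext n y
  induction n generalizing Ψ Φ with
  | zero => rw [conv_zero, conv_zero, mul_comm]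
  | succ n ih =>
    rw [apply_succ (conv Ψ Φ), apply_succ (conv Φ Ψ), D_conv, D_conv]
    change conv _ _ n _ + conv _ _ n _ = conv _ _ n _ + conv _ _ n _
    rw [ih, ih Ψ, add_comm]

theorem add_conv (Ψ Φ Χ : CF E) : conv (Φ + Χ) Ψ = conv Φ Ψ + conv Χ Ψ := by
  rw [conv_comm, conv_add, conv_comm Ψ, conv_comm Ψ]

theorem conv_assoc (Ψ Φ Χ : CF E) : conv (conv Ψ Φ) Χ = conv Ψ (conv Φ Χ) := by
  funext n y
  induction n generalizing Ψ Φ Χ with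
  | zero => simp only [conv_zero, mul_assoc]
  | succ n ih =>
    rw [apply_succ (conv (conv Ψ Φ) Χ), apply_succ (conv Ψ _)]
    simp only [D_conv, add_conv, conv_add, Pi.add_apply, ih, add_assoc]

theorem D_unit (x : E) : D x (unit : CF E) = 0 := by
  funext n y
  simp [D, unit]

theorem conv_zero_right (Ψ : CF E) : conv Ψ 0 = 0 := by
  funext n y
  simp [conv]

theorem D_starPow (x : E) (Φ : CF E) (m : ℕ) :
    D x (starPow Φ (m+1)) = ((m : ℝ) + 1) • conv (D x Φ) (starPow Φ m) := by
  induction m with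
  | zero =>
    change D x (conv Φ unit) = _
    rw [D_conv, D_unit, conv_zero_right]
    simp [starPow]
  | succ m ih =>
    change D x (conv Φ (starPow Φ (m+1))) = _
    rw [D_conv, ih, conv_smul, ← conv_assoc, conv_comm Φ (D x Φ), conv_assoc]
    change _ + _ • conv _ (starPow Φ (m+1)) = _
    push_cast
    module

theorem starPow_vanish (Φ : CF E) (h0 : Φ 0 = 0) (m n : ℕ) (h : n < m) (y : Fin n → E) :
    starPow Φ m n y = 0 := by
  induction m generalizing n with
  | zero => omega
  | succ m ih =>
    cases n with
    | zero =>
      change conv Φ _ 0 y = 0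
      rw [conv_zero, h0]
      simp
    | succ n =>
      rw [apply_succ (starPow Φ (m+1)), D_starPow]
      change _ * conv _ _ n _ = 0
      unfold conv
      rw [Finset.sum_eq_zero, mul_zero]
      intro I _
      rw [ih, mul_zero]
      have := Finset.card_le_univ Iᶜ
      rw [Fintype.card_fin] at this
      omega

theorem starExp_eq (Φ : CF E) (h0 : Φ 0 = 0) (n N : ℕ) (h : n ≤ N) (y : Fin n → E) :
    starExp Φ n y = ∑ m ∈ Finset.range (N + 1), ((m.factorial : ℝ))⁻¹ * starPow Φ m n y := by
  unfold starExp
  apply Finset.sum_subset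
  · intro i
    simp only [Finset.mem_range]
    omega
  · intro m _ hm
    rw [starPow_vanish Φ h0 m n (by simpa using hm), mul_zero]

theorem D_starExp (x : E) (Φ : CF E) (h0 : Φ 0 = 0) :
    D x (starExp Φ) = conv (starExp Φ) (D x Φ) := by
  rw [conv_comm]
  funext n y
  change ∑ m ∈ Finset.range (n + 1 + 1), ((m.factorial : ℝ))⁻¹ * D x (starPow Φ m) n y = _
  rw [Finset.sum_range_succ']
  simp only [D_starPow]
  have h1 : D x (starPow Φ 0) n y = 0 := by
    change D x unit n y = 0
    rw [D_unit]
    rfl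
  rw [h1, mul_zero, add_zero]
  have h2 : conv (D x Φ) (starExp Φ) n y = ∑ m ∈ Finset.range (n + 1),
      ((m.factorial : ℝ))⁻¹ * conv (D x Φ) (starPow Φ m) n y := by
    unfold conv
    simp only [Finset.mul_sum]
    rw [Finset.sum_comm]
    refine Finset.sum_congr rfl fun I _ => ?_
    rw [starExp_eq Φ h0 _ n (by simpa using Finset.card_le_univ Iᶜ), Finset.mul_sum]
    refine Finset.sum_congr rfl fun m _ => ?_
    ring
  rw [h2]
  refine Finset.sum_congr rfl fun m _ => ?_
  simp only [Pi.smul_apply, smul_eq_mul, Nat.factorial_succ]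
  push_cast
  have : (m : ℝ) + 1 ≠ 0 := by positivity
  have : (m.factorial : ℝ) ≠ 0 := by positivity
  field_simp

end CF

open CF in
/-- second derivative of a star-exponential,
`D_{x₁,x₂}(exp∗ Φ) = (exp∗ Φ) ∗ (D_{x₁}Φ ∗ D_{x₂}Φ + D_{x₁,x₂}Φ)`. -/
theorem D2_starExp (E : Type) (x₁ x₂ : E) (Φ : CF E) (hΦ0 : Φ 0 = 0) (hΦsymm : IsSymm Φ) :
    D2 x₁ x₂ (starExp Φ) =
      conv (starExp Φ) (conv (D x₁ Φ) (D x₂ Φ) + D2 x₁ x₂ Φ) := by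
  unfold D2
  rw [D_starExp x₂ Φ hΦ0, D_conv, D_starExp x₁ Φ hΦ0, conv_assoc, conv_add]
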